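/- Let (C, δ) and (D, ∂) be S¹-complexes over a commutative ring K and let κ = (κ₀, κ₁, …) be an S¹-equivariant chain map between them. If κ₀ : (C, δ₀) → (D, ∂₀) is a quasi-isomorphism, then the induced map κ^{S¹} : C^∧ → D^∧ induces an isomorphism on periodic cyclic homology HĈ_*(C) ≅ HĈ_*(D). -/

import Mathlib

open Finset DirectSum

set_option maxHeartbeats 1000000
set_option synthInstance.maxHeartbeats 1000000

noncomputable section Lib

variable (K : Type) [CommRing K]

/-- Transport of graded components along an equality of degrees. -/
def pcast (F : ℤ → Type) [∀ n, AddCommGroup (F n)] [∀ n, Module K (F n)]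
    {a b : ℤ} (h : a = b) : F a →ₗ[K] F b := by subst h; exact LinearMap.id

/-- Transport of graded components along an equality of degrees when it holds
(and the zero map otherwise). -/
def tr (F : ℤ → Type) [∀ n, AddCommGroup (F n)] [∀ n, Module K (F n)]
    (a b : ℤ) : F a →ₗ[K] F b := if h : a = b then pcast K F h else 0

variable (C : ℤ → Type) [∀ n, AddCommGroup (C n)] [∀ n, Module K (C n)]
variable (D : ℤ → Type) [∀ n, AddCommGroup (D n)] [∀ n, Module K (D n)]
variable (E : ℤ → Type) [∀ n, AddCommGroup (E n)] [∀ n, Module K (E n)]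

/-- An S¹-structure on a ℤ-graded `K`-module `C`: a sequence of operations
`δ i : Cⁿ → C^{n+1-2i}` with `∑_{i+j=k} δ i ∘ δ j = 0` for all `k ≥ 0`. -/
structure S1Struct where
  δ : (i : ℕ) → (n : ℤ) → C n →ₗ[K] C (n + 1 - 2 * (i : ℤ))
  rel : ∀ (k : ℕ) (n : ℤ) (x : C n),
    ∑ p ∈ antidiagonal k,
      tr K C (n + 1 - 2 * (p.2 : ℤ) + 1 - 2 * (p.1 : ℤ)) (n + 2 - 2 * (k : ℤ))
        (δ p.1 (n + 1 - 2 * (p.2 : ℤ)) (δ p.2 n x)) = 0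

/-- An S¹-equivariant chain map between S¹-complexes: a sequence of operations
`κ i : Cⁿ → D^{n-2i}` with `∑_{i+j=k} (κ i ∘ δ j - ∂ j ∘ κ i) = 0` for all `k ≥ 0`. -/
structure S1Map (S : S1Struct K C) (T : S1Struct K D) where
  κ : (i : ℕ) → (n : ℤ) → C n →ₗ[K] D (n - 2 * (i : ℤ))
  rel : ∀ (k : ℕ) (n : ℤ) (x : C n),
    ∑ p ∈ antidiagonal k,
      (tr K D (n + 1 - 2 * (p.2 : ℤ) - 2 * (p.1 : ℤ)) (n + 1 - 2 * (k : ℤ))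
          (κ p.1 (n + 1 - 2 * (p.2 : ℤ)) (S.δ p.2 n x))
        - tr K D (n - 2 * (p.1 : ℤ) + 1 - 2 * (p.2 : ℤ)) (n + 1 - 2 * (k : ℤ))
          (T.δ p.2 (n - 2 * (p.1 : ℤ)) (κ p.1 n x))) = 0

/-- An S¹-equivariant chain homotopy between two S¹-equivariant chain maps: a sequence
of operations `h i : Cⁿ → D^{n-2i-1}` with
`κ k - κ' k = ∑_{i+j=k} (h i ∘ δ j + ∂ j ∘ h i)` for all `k ≥ 0`. -/
structure S1Homotopy {S : S1Struct K C} {T : S1Struct K D} (κ κ' : S1Map K C D S T) where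
  h : (i : ℕ) → (n : ℤ) → C n →ₗ[K] D (n - 2 * (i : ℤ) - 1)
  rel : ∀ (k : ℕ) (n : ℤ) (x : C n),
    κ.κ k n x - κ'.κ k n x =
      ∑ p ∈ antidiagonal k,
        (tr K D (n + 1 - 2 * (p.2 : ℤ) - 2 * (p.1 : ℤ) - 1) (n - 2 * (k : ℤ))
            (h p.1 (n + 1 - 2 * (p.2 : ℤ)) (S.δ p.2 n x))
          + tr K D (n - 2 * (p.1 : ℤ) - 1 + 1 - 2 * (p.2 : ℤ)) (n - 2 * (k : ℤ))
            (T.δ p.2 (n - 2 * (p.1 : ℤ) - 1) (h p.1 n x)))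

/-- The degree `n` part of the negative cyclic complex `C⁻ = C[[u]]`:
formal power series `∑_{i ≥ 0} aᵢ uⁱ` with `aᵢ ∈ C^{n-2i}`. -/
abbrev NegCyc (n : ℤ) : Type := (i : ℕ) → C (n - 2 * (i : ℤ))

/-- The componentwise extension `(∑ uⁱ F i) (∑ aⱼ uʲ) = ∑_k (∑_{i+j=k} F i (aⱼ)) u^k`
of a sequence of operations `F i` of degree `e - 2i` to the power series complexes. -/
def nExt (e : ℤ) (F : (i : ℕ) → (m : ℤ) → C m →ₗ[K] D (m + e - 2 * (i : ℤ))) (n t : ℤ) :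
    NegCyc C n →ₗ[K] NegCyc D t where
  toFun x k := ∑ p ∈ antidiagonal k,
    tr K D (n - 2 * (p.2 : ℤ) + e - 2 * (p.1 : ℤ)) (t - 2 * (k : ℤ))
      (F p.1 (n - 2 * (p.2 : ℤ)) (x p.2))
  map_add' x y := by
    funext k
    simp [Finset.sum_add_distrib]
  map_smul' c x := by
    funext k
    simp [Finset.smul_sum]

/-- The equivariant differential `δ^{S¹} = δ₀ + uδ₁ + u²δ₂ + ⋯` on `C⁻`. -/
def deltaNeg (S : S1Struct K C) (n : ℤ) : NegCyc C n →ₗ[K] NegCyc C (n + 1) :=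
  nExt K C C 1 S.δ n (n + 1)

/-- The map `κ^{S¹} = κ₀ + uκ₁ + u²κ₂ + ⋯ : C⁻ → D⁻`. -/
def kappaNeg {S : S1Struct K C} {T : S1Struct K D} (κ : S1Map K C D S T) (n : ℤ) :
    NegCyc C n →ₗ[K] NegCyc D n :=
  nExt K C D 0 (fun i m => tr K D (m - 2 * (i : ℤ)) (m + 0 - 2 * (i : ℤ)) ∘ₗ κ.κ i m) n n

/-- The map `H = h₀ + uh₁ + u²h₂ + ⋯ : C⁻ → D⁻[-1]`. -/
def homotopyNeg {S : S1Struct K C} {T : S1Struct K D} {κ κ' : S1Map K C D S T}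
    (ht : S1Homotopy K C D κ κ') (n : ℤ) : NegCyc C n →ₗ[K] NegCyc D (n - 1) :=
  nExt K C D (-1) (fun i m => tr K D (m - 2 * (i : ℤ) - 1) (m + (-1) - 2 * (i : ℤ)) ∘ₗ ht.h i m)
    n (n - 1)

/-- The degree `n` part of the periodic complex `C^∧ = C((u))`, as a submodule of all
families `(aᵢ)_{i ∈ ℤ}` with `aᵢ ∈ C^{n-2i}`: those with `aᵢ = 0` for all sufficiently
negative `i` (formal Laurent series). -/
def PerSub (n : ℤ) : Submodule K ((i : ℤ) → C (n - 2 * i)) where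
  carrier := {x | ∃ N : ℤ, ∀ i < N, x i = 0}
  add_mem' := by
    rintro a b ⟨Na, ha⟩ ⟨Nb, hb⟩
    refine ⟨min Na Nb, fun i hi => ?_⟩
    have h1 := ha i (lt_of_lt_of_le hi (min_le_left _ _))
    have h2 := hb i (lt_of_lt_of_le hi (min_le_right _ _))
    show a i + b i = 0
    rw [h1, h2, add_zero]
  zero_mem' := ⟨0, fun _ _ => rfl⟩
  smul_mem' := by
    rintro c a ⟨N, hN⟩
    refine ⟨N, fun i hi => ?_⟩
    show c • a i = 0
    rw [hN i hi, smul_zero]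

/-- The degree `n` part of the periodic complex `C^∧ = C((u))`. -/
abbrev PerCyc (n : ℤ) : Type := ↥(PerSub K C n)

lemma natle_finite (m : ℤ) : Set.Finite {i : ℕ | (i : ℤ) ≤ m} := by
  apply Set.Finite.subset (Set.finite_Iic m.toNat)
  intro i hi
  simp only [Set.mem_setOf_eq] at hi
  simp only [Set.mem_Iic]
  omega

lemma uExt_sf (e : ℤ) (F : (i : ℕ) → (m : ℤ) → C m →ₗ[K] D (m + e - 2 * (i : ℤ))) (n t : ℤ)
    (x : PerCyc K C n) (k : ℤ) :
    (Function.support fun i : ℕ =>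
      tr K D (n - 2 * (k - (i : ℤ)) + e - 2 * (i : ℤ)) (t - 2 * k)
        (F i (n - 2 * (k - (i : ℤ))) (x.1 (k - (i : ℤ))))).Finite := by
  obtain ⟨N, hN⟩ := x.2
  apply Set.Finite.subset (natle_finite (k - N))
  intro i hi
  simp only [Function.mem_support] at hi
  simp only [Set.mem_setOf_eq]
  by_contra hcon
  push_neg at hcon
  rw [hN (k - (i : ℤ)) (by omega)] at hi
  simp at hi

/-- Componentwise extension of a sequence of operations `F i` of degree `e - 2i` to the
Laurent series complexes: `(∑ aᵢ uⁱ) ↦ ∑_k (∑_{i≥0} F i (a_{k-i})) u^k`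
(valued in the ambient product). -/
def uExtAux (e : ℤ) (F : (i : ℕ) → (m : ℤ) → C m →ₗ[K] D (m + e - 2 * (i : ℤ))) (n t : ℤ) :
    PerCyc K C n →ₗ[K] ((k : ℤ) → D (t - 2 * k)) where
  toFun x k := ∑ᶠ i : ℕ,
    tr K D (n - 2 * (k - (i : ℤ)) + e - 2 * (i : ℤ)) (t - 2 * k)
      (F i (n - 2 * (k - (i : ℤ))) (x.1 (k - (i : ℤ))))
  map_add' x y := by
    funext k
    simp only [Pi.add_apply]
    rw [← finsum_add_distrib (uExt_sf K C D e F n t x k) (uExt_sf K C D e F n t y k)]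
    apply finsum_congr
    intro i
    have hxy : (↑(x + y) : (i : ℤ) → C (n - 2 * i)) (k - (i : ℤ))
        = x.1 (k - (i : ℤ)) + y.1 (k - (i : ℤ)) := rfl
    rw [hxy, map_add, map_add]
  map_smul' c x := by
    funext k
    simp only [Pi.smul_apply, RingHom.id_apply]
    rw [smul_finsum' c (uExt_sf K C D e F n t x k)]
    apply finsum_congr
    intro i
    have hcx : (↑(c • x) : (i : ℤ) → C (n - 2 * i)) (k - (i : ℤ))
        = c • x.1 (k - (i : ℤ)) := rfl
    rw [hcx, map_smul, map_smul]

@[simp] lemma uExtAux_apply (e : ℤ) (F : (i : ℕ) → (m : ℤ) → C m →ₗ[K] D (m + e - 2 * (i : ℤ)))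
    (n t : ℤ) (x : PerCyc K C n) (k : ℤ) :
    uExtAux K C D e F n t x k = ∑ᶠ i : ℕ,
      tr K D (n - 2 * (k - (i : ℤ)) + e - 2 * (i : ℤ)) (t - 2 * k)
        (F i (n - 2 * (k - (i : ℤ))) (x.1 (k - (i : ℤ)))) := rfl

lemma uExtAux_mem (e : ℤ) (F : (i : ℕ) → (m : ℤ) → C m →ₗ[K] D (m + e - 2 * (i : ℤ)))
    (n t : ℤ) (x : PerCyc K C n) : uExtAux K C D e F n t x ∈ PerSub K D t := by
  obtain ⟨N, hN⟩ := x.2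
  refine ⟨N, fun k hk => ?_⟩
  rw [uExtAux_apply]
  apply finsum_eq_zero_of_forall_eq_zero
  intro i
  rw [hN (k - (i : ℤ)) (by omega)]
  simp

/-- Componentwise extension of a sequence of operations `F i` of degree `e - 2i` to the
complexes of formal Laurent series. -/
def uExt (e : ℤ) (F : (i : ℕ) → (m : ℤ) → C m →ₗ[K] D (m + e - 2 * (i : ℤ))) (n t : ℤ) :
    PerCyc K C n →ₗ[K] PerCyc K D t :=
  LinearMap.codRestrict (PerSub K D t) (uExtAux K C D e F n t) (uExtAux_mem K C D e F n t)

@[simp] lemma uExt_coe_apply (e : ℤ) (F : (i : ℕ) → (m : ℤ) → C m →ₗ[K] D (m + e - 2 * (i : ℤ)))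
    (n t : ℤ) (x : PerCyc K C n) (k : ℤ) :
    (uExt K C D e F n t x).1 k = ∑ᶠ i : ℕ,
      tr K D (n - 2 * (k - (i : ℤ)) + e - 2 * (i : ℤ)) (t - 2 * k)
        (F i (n - 2 * (k - (i : ℤ))) (x.1 (k - (i : ℤ)))) := rfl

/-- The equivariant differential `δ^{S¹} = δ₀ + uδ₁ + u²δ₂ + ⋯` on `C^∧ = C((u))`. -/
def deltaPer (S : S1Struct K C) (n : ℤ) : PerCyc K C n →ₗ[K] PerCyc K C (n + 1) :=
  uExt K C C 1 S.δ n (n + 1)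

/-- The map `κ^{S¹} = κ₀ + uκ₁ + u²κ₂ + ⋯ : C^∧ → D^∧`. -/
def kappaPer {S : S1Struct K C} {T : S1Struct K D} (κ : S1Map K C D S T) (n : ℤ) :
    PerCyc K C n →ₗ[K] PerCyc K D n :=
  uExt K C D 0 (fun i m => tr K D (m - 2 * (i : ℤ)) (m + 0 - 2 * (i : ℤ)) ∘ₗ κ.κ i m) n n

/-- The map `H = h₀ + uh₁ + u²h₂ + ⋯ : C^∧ → D^∧[-1]`. -/
def homotopyPer {S : S1Struct K C} {T : S1Struct K D} {κ κ' : S1Map K C D S T}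
    (ht : S1Homotopy K C D κ κ') (n : ℤ) : PerCyc K C n →ₗ[K] PerCyc K D (n - 1) :=
  uExt K C D (-1) (fun i m => tr K D (m - 2 * (i : ℤ) - 1) (m + (-1) - 2 * (i : ℤ)) ∘ₗ ht.h i m)
    n (n - 1)

/-- The submodule `u^m C⁻ ⊆ C^∧` of Laurent series supported in powers `≥ m`. -/
def uPow (m : ℤ) (n : ℤ) : Submodule K (PerCyc K C n) where
  carrier := {x | ∀ i < m, x.1 i = 0}
  add_mem' := by
    intro a b ha hb i hi
    show a.1 i + b.1 i = 0
    rw [ha i hi, hb i hi, add_zero]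
  zero_mem' := fun _ _ => rfl
  smul_mem' := by
    intro c a ha i hi
    show c • a.1 i = 0
    rw [ha i hi, smul_zero]

lemma uExt_mem_uPow (e : ℤ) (F : (i : ℕ) → (m : ℤ) → C m →ₗ[K] D (m + e - 2 * (i : ℤ)))
    (n t : ℤ) (m : ℤ) (x : PerCyc K C n) (hx : x ∈ uPow K C m n) :
    uExt K C D e F n t x ∈ uPow K D m t := by
  intro k hk
  rw [uExt_coe_apply]
  apply finsum_eq_zero_of_forall_eq_zero
  intro i
  rw [hx (k - (i : ℤ)) (by omega)]
  simp

/-- The restriction of `δ^{S¹}` to the subcomplex `u^m C⁻ ⊆ C^∧`. -/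
def deltaRes (S : S1Struct K C) (m n : ℤ) : ↥(uPow K C m n) →ₗ[K] ↥(uPow K C m (n + 1)) :=
  (deltaPer K C S n).restrict (fun x hx => uExt_mem_uPow K C C 1 S.δ n (n + 1) m x hx)

/-- The restriction of `κ^{S¹}` to the subcomplexes `u^m C⁻ → u^m D⁻`. -/
def kappaRes {S : S1Struct K C} {T : S1Struct K D} (κ : S1Map K C D S T) (m n : ℤ) :
    ↥(uPow K C m n) →ₗ[K] ↥(uPow K D m n) :=
  (kappaPer K C D κ n).restrict
    (fun x hx => uExt_mem_uPow K C D 0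
      (fun i m => tr K D (m - 2 * (i : ℤ)) (m + 0 - 2 * (i : ℤ)) ∘ₗ κ.κ i m) n n m x hx)

/-- The degree `n` part of the quotient complex `C⁺ = C^∧ / uC⁻`. -/
abbrev QtC (n : ℤ) : Type := PerCyc K C n ⧸ uPow K C 1 n

/-- The operator on `C⁺ = C^∧/uC⁻` induced by `δ^{S¹}`. -/
def deltaPlus (S : S1Struct K C) (n : ℤ) : QtC K C n →ₗ[K] QtC K C (n + 1) :=
  Submodule.mapQ _ _ (deltaPer K C S n)
    (fun x hx => uExt_mem_uPow K C C 1 S.δ n (n + 1) 1 x hx)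

/-- The map `C⁺ → D⁺` induced by `κ^{S¹}`. -/
def kappaPlus {S : S1Struct K C} {T : S1Struct K D} (κ : S1Map K C D S T) (n : ℤ) :
    QtC K C n →ₗ[K] QtC K D n :=
  Submodule.mapQ _ _ (kappaPer K C D κ n)
    (fun x hx => uExt_mem_uPow K C D 0
      (fun i m => tr K D (m - 2 * (i : ℤ)) (m + 0 - 2 * (i : ℤ)) ∘ₗ κ.κ i m) n n 1 x hx)

/-- The map `C⁺ → D⁺[-1]` induced by an S¹-equivariant chain homotopy. -/
def homotopyPlus {S : S1Struct K C} {T : S1Struct K D} {κ κ' : S1Map K C D S T}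
    (ht : S1Homotopy K C D κ κ') (n : ℤ) : QtC K C n →ₗ[K] QtC K D (n - 1) :=
  Submodule.mapQ _ _ (homotopyPer K C D ht n)
    (fun x hx => uExt_mem_uPow K C D (-1)
      (fun i m => tr K D (m - 2 * (i : ℤ) - 1) (m + (-1) - 2 * (i : ℤ)) ∘ₗ ht.h i m)
      n (n - 1) 1 x hx)

/-- The homology in degree `n` of a cochain complex of `K`-modules given degreewise by
`d n : F n → F (n+1)`: the kernel of `d n` modulo the image of `d (n-1)`. -/
abbrev HomologyOf (F : ℤ → Type) [∀ n, AddCommGroup (F n)] [∀ n, Module K (F n)]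
    (d : (n : ℤ) → F n →ₗ[K] F (n + 1)) (n : ℤ) : Type :=
  ↥(LinearMap.ker (d n)) ⧸
    Submodule.comap (LinearMap.ker (d n)).subtype
      (LinearMap.range (pcast K F (show n - 1 + 1 = n by ring) ∘ₗ d (n - 1)))

/-- A chain map `f` between cochain complexes `(F, dF)` and `(G, dG)` induces an isomorphism
on homology in every degree: for every `n` there is a bijective linear map between the homology
groups sending the class of a cycle `x` to the class of the cycle `f n x`. -/
def InducesIso (F : ℤ → Type) [∀ n, AddCommGroup (F n)] [∀ n, Module K (F n)]
    (G : ℤ → Type) [∀ n, AddCommGroup (G n)] [∀ n, Module K (G n)]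
    (dF : (n : ℤ) → F n →ₗ[K] F (n + 1)) (dG : (n : ℤ) → G n →ₗ[K] G (n + 1))
    (f : (n : ℤ) → F n →ₗ[K] G n) : Prop :=
  ∀ n : ℤ, ∃ φ : HomologyOf K F dF n →ₗ[K] HomologyOf K G dG n,
    Function.Bijective φ ∧
    ∀ (x : F n) (hx : x ∈ LinearMap.ker (dF n)) (hy : f n x ∈ LinearMap.ker (dG n)),
      φ (Submodule.Quotient.mk ⟨x, hx⟩) = Submodule.Quotient.mk ⟨f n x, hy⟩

/-- The differential `δ₀` of an S¹-complex, as a degree `+1` operator. -/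
def d0 (S : S1Struct K C) (n : ℤ) : C n →ₗ[K] C (n + 1) :=
  tr K C (n + 1 - 2 * ((0 : ℕ) : ℤ)) (n + 1) ∘ₗ S.δ 0 n

/-- The leading term `κ₀` of an S¹-equivariant chain map, as a degree `0` operator. -/
def k0 {S : S1Struct K C} {T : S1Struct K D} (κ : S1Map K C D S T) (n : ℤ) :
    C n →ₗ[K] D n :=
  tr K D (n - 2 * ((0 : ℕ) : ℤ)) n ∘ₗ κ.κ 0 n

/-- The degree `d` part of the truncated complex `C⟨m,n⟩ = uⁿC⁻/u^mC⁻`: families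
`(a_p)_{n ≤ p ≤ m-1}` with `a_p ∈ C^{d-2p}`, realized as families over `ℤ`
vanishing outside `[n, m-1]`. -/
def truncSub (m n d : ℤ) : Submodule K ((p : ℤ) → C (d - 2 * p)) where
  carrier := {a | ∀ p : ℤ, (p < n ∨ m ≤ p) → a p = 0}
  add_mem' := by
    intro a b ha hb p hp
    show a p + b p = 0
    rw [ha p hp, hb p hp, add_zero]
  zero_mem' := fun _ _ => rfl
  smul_mem' := by
    intro c a ha p hp
    show c • a p = 0
    rw [ha p hp, smul_zero]

/-- The differential of the truncated complex `C⟨m,n⟩`, with components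
`(δ^{S¹}x)_q = ∑_{i ≥ 0, q-i ≥ n} δᵢ(x_{q-i})` for `n ≤ q ≤ m-1`
(valued in the ambient product). -/
def truncDAux (S : S1Struct K C) (m n d : ℤ) :
    ↥(truncSub K C m n d) →ₗ[K] ((q : ℤ) → C (d + 1 - 2 * q)) where
  toFun x q :=
    if n ≤ q ∧ q < m then
      ∑ i ∈ Finset.range ((q - n).toNat + 1),
        tr K C (d - 2 * (q - (i : ℤ)) + 1 - 2 * (i : ℤ)) (d + 1 - 2 * q)
          (S.δ i (d - 2 * (q - (i : ℤ))) (x.1 (q - (i : ℤ))))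
    else 0
  map_add' x y := by
    funext q
    by_cases h : n ≤ q ∧ q < m
    · simp only [Pi.add_apply, if_pos h]
      rw [← Finset.sum_add_distrib]
      apply Finset.sum_congr rfl
      intro i _
      have hxy : (↑(x + y) : (p : ℤ) → C (d - 2 * p)) (q - (i : ℤ))
          = x.1 (q - (i : ℤ)) + y.1 (q - (i : ℤ)) := rfl
      rw [hxy, map_add, map_add]
    · simp only [Pi.add_apply, if_neg h, add_zero]
  map_smul' c x := by
    funext q
    by_cases h : n ≤ q ∧ q < m
    · simp only [Pi.smul_apply, RingHom.id_apply, if_pos h]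
      rw [Finset.smul_sum]
      apply Finset.sum_congr rfl
      intro i _
      have hcx : (↑(c • x) : (p : ℤ) → C (d - 2 * p)) (q - (i : ℤ))
          = c • x.1 (q - (i : ℤ)) := rfl
      rw [hcx, map_smul, map_smul]
    · simp only [Pi.smul_apply, RingHom.id_apply, if_neg h, smul_zero]

@[simp] lemma truncDAux_apply (S : S1Struct K C) (m n d : ℤ) (x : ↥(truncSub K C m n d))
    (q : ℤ) : truncDAux K C S m n d x q =
    if n ≤ q ∧ q < m then
      ∑ i ∈ Finset.range ((q - n).toNat + 1),
        tr K C (d - 2 * (q - (i : ℤ)) + 1 - 2 * (i : ℤ)) (d + 1 - 2 * q)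
          (S.δ i (d - 2 * (q - (i : ℤ))) (x.1 (q - (i : ℤ))))
    else 0 := rfl

lemma truncDAux_mem (S : S1Struct K C) (m n d : ℤ) (x : ↥(truncSub K C m n d)) :
    truncDAux K C S m n d x ∈ truncSub K C m n (d + 1) := by
  intro q hq
  rw [truncDAux_apply, if_neg (by omega)]

/-- The differential of the truncated complex `C⟨m,n⟩ = uⁿC⁻/u^mC⁻`. -/
def truncD (S : S1Struct K C) (m n d : ℤ) :
    ↥(truncSub K C m n d) →ₗ[K] ↥(truncSub K C m n (d + 1)) :=
  LinearMap.codRestrict _ (truncDAux K C S m n d) (truncDAux_mem K C S m n d)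

/-- The chain map `κ⟨m,n⟩ : C⟨m,n⟩ → D⟨m,n⟩` induced by an S¹-equivariant chain map,
with components `(κ⟨m,n⟩x)_q = ∑_{i ≥ 0, q-i ≥ n} κᵢ(x_{q-i})`
(valued in the ambient product). -/
def truncKAux {S : S1Struct K C} {T : S1Struct K D} (κ : S1Map K C D S T) (m n d : ℤ) :
    ↥(truncSub K C m n d) →ₗ[K] ((q : ℤ) → D (d - 2 * q)) where
  toFun x q :=
    if n ≤ q ∧ q < m then
      ∑ i ∈ Finset.range ((q - n).toNat + 1),
        tr K D (d - 2 * (q - (i : ℤ)) - 2 * (i : ℤ)) (d - 2 * q)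
          (κ.κ i (d - 2 * (q - (i : ℤ))) (x.1 (q - (i : ℤ))))
    else 0
  map_add' x y := by
    funext q
    by_cases h : n ≤ q ∧ q < m
    · simp only [Pi.add_apply, if_pos h]
      rw [← Finset.sum_add_distrib]
      apply Finset.sum_congr rfl
      intro i _
      have hxy : (↑(x + y) : (p : ℤ) → C (d - 2 * p)) (q - (i : ℤ))
          = x.1 (q - (i : ℤ)) + y.1 (q - (i : ℤ)) := rfl
      rw [hxy, map_add, map_add]
    · simp only [Pi.add_apply, if_neg h, add_zero]
  map_smul' c x := by
    funext q
    by_cases h : n ≤ q ∧ q < m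
    · simp only [Pi.smul_apply, RingHom.id_apply, if_pos h]
      rw [Finset.smul_sum]
      apply Finset.sum_congr rfl
      intro i _
      have hcx : (↑(c • x) : (p : ℤ) → C (d - 2 * p)) (q - (i : ℤ))
          = c • x.1 (q - (i : ℤ)) := rfl
      rw [hcx, map_smul, map_smul]
    · simp only [Pi.smul_apply, RingHom.id_apply, if_neg h, smul_zero]

lemma truncKAux_mem {S : S1Struct K C} {T : S1Struct K D} (κ : S1Map K C D S T)
    (m n d : ℤ) (x : ↥(truncSub K C m n d)) :
    truncKAux K C D κ m n d x ∈ truncSub K D m n d := by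
  intro q hq
  show (if n ≤ q ∧ q < m then _ else 0) = 0
  rw [if_neg (by omega)]

/-- The chain map `κ⟨m,n⟩ : C⟨m,n⟩ → D⟨m,n⟩` induced by an S¹-equivariant chain map. -/
def truncK {S : S1Struct K C} {T : S1Struct K D} (κ : S1Map K C D S T) (m n d : ℤ) :
    ↥(truncSub K C m n d) →ₗ[K] ↥(truncSub K D m n d) :=
  LinearMap.codRestrict _ (truncKAux K C D κ m n d) (truncKAux_mem K C D κ m n d)

end Lib

/-! A chain map is a quasi-isomorphism exactly when its mapping cone is acyclic. The cone of
`κ^{S¹}` is filtered by the powers of `u`, and on leading coefficients its differential is that of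
the cone of `κ₀`. So if the cone of `κ₀` is acyclic, every cycle in filtration degree `m` becomes,
after subtracting a boundary of an element of filtration degree `m`, a cycle in filtration degree
`m + 1`. Since Laurent series are complete and separated for the `u`-adic filtration, iterating
this exhibits the cycle as the boundary of a convergent sum. -/

noncomputable section

section Transport

variable {K : Type} [CommRing K]
variable {C : ℤ → Type} [∀ n, AddCommGroup (C n)] [∀ n, Module K (C n)]
variable {D : ℤ → Type} [∀ n, AddCommGroup (D n)] [∀ n, Module K (D n)]

@[simp]
lemma tr_self (a : ℤ) (x : C a) : tr K C a a x = x := by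
  simp [tr, pcast]

lemma tr_of_ne {a b : ℤ} (h : a ≠ b) (x : C a) : tr K C a b x = 0 := by
  simp [tr, h]

lemma tr_tr {a b : ℤ} (h : a = b) (c : ℤ) (x : C a) :
    tr K C b c (tr K C a b x) = tr K C a c x := by
  subst h
  rw [tr_self]

lemma tr_map_tr (f : ℤ → ℤ) (φ : (m : ℤ) → C m →ₗ[K] D (f m)) {a b : ℤ} (h : a = b) (c : ℤ)
    (x : C a) : tr K D (f b) c (φ b (tr K C a b x)) = tr K D (f a) c (φ a x) := by
  subst h
  rw [tr_self]

lemma tr_eq_zero_iff {a b : ℤ} (h : a = b) (x : C a) : tr K C a b x = 0 ↔ x = 0 := by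
  subst h
  rw [tr_self]

end Transport

section Homology

variable {K : Type} [CommRing K]
variable {F : ℤ → Type} [∀ n, AddCommGroup (F n)] [∀ n, Module K (F n)]
variable {G : ℤ → Type} [∀ n, AddCommGroup (G n)] [∀ n, Module K (G n)]
variable {dF : (n : ℤ) → F n →ₗ[K] F (n + 1)} {dG : (n : ℤ) → G n →ₗ[K] G (n + 1)}
variable {f : (n : ℤ) → F n →ₗ[K] G n}

lemma range_pcast_comp (d : (n : ℤ) → F n →ₗ[K] F (n + 1)) {a b : ℤ} (h : a + 1 = b + 1) :
    LinearMap.range (pcast K F h ∘ₗ d a) = LinearMap.range (d b) := by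
  obtain rfl : a = b := by omega
  rfl

lemma homologyOf_mk_eq_mk_iff {n : ℤ} (x y : LinearMap.ker (dF (n + 1))) :
    (Submodule.Quotient.mk x : HomologyOf K F dF (n + 1)) = Submodule.Quotient.mk y ↔
      ∃ w, dF n w = x - y := by
  rw [Submodule.Quotient.eq, Submodule.mem_comap,
    range_pcast_comp dF (show n + 1 - 1 + 1 = n + 1 by ring)]
  rfl

lemma map_mem_ker_of_comm (hf : ∀ n, f (n + 1) ∘ₗ dF n = dG n ∘ₗ f n) (n : ℤ) :
    ∀ x ∈ LinearMap.ker (dF n), f n x ∈ LinearMap.ker (dG n) := by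
  intro x hx
  rw [LinearMap.mem_ker, ← LinearMap.comp_apply, ← hf, LinearMap.comp_apply, hx, map_zero]

/-- The map induced on homology in degree `n` by the chain map `f`. -/
def homologyMap (hf : ∀ n, f (n + 1) ∘ₗ dF n = dG n ∘ₗ f n) (n : ℤ) :
    HomologyOf K F dF n →ₗ[K] HomologyOf K G dG n :=
  Submodule.mapQ _ _ ((f n).restrict (map_mem_ker_of_comm hf n)) <| by
    obtain ⟨n, rfl⟩ : ∃ m, n = m + 1 := ⟨n - 1, by ring⟩
    rintro ⟨x, hx⟩ hx'
    simp only [Submodule.mem_comap,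
      range_pcast_comp _ (show n + 1 - 1 + 1 = n + 1 by ring)] at hx' ⊢
    obtain ⟨w, rfl⟩ := hx'
    exact ⟨f n w, (LinearMap.congr_fun (hf n) w).symm⟩

lemma inducesIso_iff_bijective_homologyMap (hf : ∀ n, f (n + 1) ∘ₗ dF n = dG n ∘ₗ f n) :
    InducesIso K F G dF dG f ↔ ∀ n, Function.Bijective (homologyMap hf n) := by
  refine forall_congr' fun n => ⟨?_, fun h => ⟨homologyMap hf n, h, fun _ _ _ => rfl⟩⟩
  rintro ⟨φ, hφ, hφf⟩
  suffices homologyMap hf n = φ from this ▸ hφ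
  refine Submodule.linearMap_qext _ (LinearMap.ext fun x => ?_)
  exact (hφf x x.2 (map_mem_ker_of_comm hf n x x.2)).symm

lemma injective_homologyMap_iff (hf : ∀ n, f (n + 1) ∘ₗ dF n = dG n ∘ₗ f n) (n : ℤ) :
    Function.Injective (homologyMap hf (n + 1)) ↔
      ∀ x y, dF (n + 1) x = 0 → f (n + 1) x = dG n y → ∃ w, dF n w = x := by
  rw [injective_iff_map_eq_zero, (Submodule.Quotient.mk_surjective _).forall]
  have mk_eq_zero (x : LinearMap.ker (dF (n + 1))) :
      (Submodule.Quotient.mk x : HomologyOf K F dF (n + 1)) = 0 ↔ ∃ w, dF n w = x := by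
    simpa using homologyOf_mk_eq_mk_iff x 0
  have map_mk_eq_zero (x : LinearMap.ker (dF (n + 1))) :
      homologyMap hf (n + 1) (Submodule.Quotient.mk x) = 0 ↔ ∃ y, dG n y = f (n + 1) x := by
    refine (homologyOf_mk_eq_mk_iff ⟨f (n + 1) x, map_mem_ker_of_comm hf (n + 1) x x.2⟩ 0).trans ?_
    simp only [ZeroMemClass.coe_zero, sub_zero]
  simp only [mk_eq_zero, map_mk_eq_zero]
  exact ⟨fun h x y hx hxy => h ⟨x, hx⟩ ⟨y, hxy.symm⟩, fun h x ⟨y, hy⟩ => h x y x.2 hy.symm⟩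

lemma surjective_homologyMap_iff (hf : ∀ n, f (n + 1) ∘ₗ dF n = dG n ∘ₗ f n) (n : ℤ) :
    Function.Surjective (homologyMap hf (n + 1)) ↔
      ∀ y, dG (n + 1) y = 0 → ∃ x z, dF (n + 1) x = 0 ∧ f (n + 1) x - dG n z = y := by
  have map_mk_eq_mk (x : LinearMap.ker (dF (n + 1))) (y : LinearMap.ker (dG (n + 1))) :
      homologyMap hf (n + 1) (Submodule.Quotient.mk x) = Submodule.Quotient.mk y ↔
        ∃ z, f (n + 1) x - dG n z = y := by
    refine (homologyOf_mk_eq_mk_iff ⟨f (n + 1) x, map_mem_ker_of_comm hf (n + 1) x x.2⟩ y).trans ?_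
    exact exists_congr fun z => by rw [eq_sub_iff_add_eq, sub_eq_iff_eq_add', eq_comm]
  simp only [Function.Surjective, (Submodule.Quotient.mk_surjective _).forall,
    (Submodule.Quotient.mk_surjective _).exists, map_mk_eq_mk]
  exact ⟨fun h y hy => let ⟨x, z, hz⟩ := h ⟨y, hy⟩; ⟨x, z, x.2, hz⟩,
    fun h y => let ⟨x, z, hx, hz⟩ := h y y.2; ⟨⟨x, hx⟩, z, hz⟩⟩

end Homology

section Cone

variable {K : Type} [CommRing K]
variable {F : ℤ → Type} [∀ n, AddCommGroup (F n)] [∀ n, Module K (F n)]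
variable {G : ℤ → Type} [∀ n, AddCommGroup (G n)] [∀ n, Module K (G n)]

/-- The differential `(w, z) ↦ (d w, f w - d z)` of the mapping cone of `f`, whose degree `n`
part is `F (n + 1) × G n`. The sign that makes it square to zero is put on the differential of
`G` rather than on that of `F`. -/
def coneD (dF : (n : ℤ) → F n →ₗ[K] F (n + 1)) (dG : (n : ℤ) → G n →ₗ[K] G (n + 1))
    (f : (n : ℤ) → F n →ₗ[K] G n) (n : ℤ) :
    F (n + 1) × G n →ₗ[K] F (n + 1 + 1) × G (n + 1) :=
  (dF (n + 1) ∘ₗ LinearMap.fst K _ _).prod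
    (f (n + 1) ∘ₗ LinearMap.fst K _ _ - dG n ∘ₗ LinearMap.snd K _ _)

variable {dF : (n : ℤ) → F n →ₗ[K] F (n + 1)} {dG : (n : ℤ) → G n →ₗ[K] G (n + 1)}
variable {f : (n : ℤ) → F n →ₗ[K] G n}

@[simp]
lemma coneD_apply (n : ℤ) (p : F (n + 1) × G n) :
    coneD dF dG f n p = (dF (n + 1) p.1, f (n + 1) p.1 - dG n p.2) := rfl

lemma coneD_comp_coneD (hF : ∀ n, dF (n + 1) ∘ₗ dF n = 0) (hG : ∀ n, dG (n + 1) ∘ₗ dG n = 0)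
    (hf : ∀ n, f (n + 1) ∘ₗ dF n = dG n ∘ₗ f n) (n : ℤ) :
    coneD dF dG f (n + 1) ∘ₗ coneD dF dG f n = 0 := by
  simp only [LinearMap.ext_iff, LinearMap.comp_apply, LinearMap.zero_apply] at hF hG hf ⊢
  intro p
  simp [hF, hG, hf]

theorem inducesIso_iff_exact_coneD (hF : ∀ n, dF (n + 1) ∘ₗ dF n = 0)
    (hG : ∀ n, dG (n + 1) ∘ₗ dG n = 0) (hf : ∀ n, f (n + 1) ∘ₗ dF n = dG n ∘ₗ f n) :
    InducesIso K F G dF dG f ↔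
      ∀ n, Function.Exact (coneD dF dG f n) (coneD dF dG f (n + 1)) := by
  have shift {P : ℤ → Prop} : (∀ n, P n) ↔ ∀ n, P (n + 1) :=
    (Equiv.addRight (1 : ℤ)).surjective.forall
  rw [inducesIso_iff_bijective_homologyMap hf, shift]
  simp only [Function.Bijective, injective_homologyMap_iff, surjective_homologyMap_iff]
  constructor
  · refine fun h n => LinearMap.exact_of_comp_eq_zero_of_ker_le_range
      (coneD_comp_coneD hF hG hf n) ?_
    rintro ⟨x, y⟩ hxy
    obtain ⟨hx, hy⟩ : dF _ x = 0 ∧ f _ x - dG _ y = 0 := by simpa using hxy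
    obtain ⟨w, rfl⟩ := (h (n + 1)).1 x y hx (sub_eq_zero.1 hy)
    have hwy : dG (n + 1) (y - f (n + 1) w) = 0 := by
      rw [map_sub, ← sub_eq_zero.1 hy, sub_eq_zero]
      exact LinearMap.congr_fun (hf (n + 1)) w
    obtain ⟨c, z, hc, hz⟩ := (h n).2 _ hwy
    refine ⟨(w + c, z), Prod.ext (by simp [hc]) ?_⟩
    change f (n + 1) (w + c) - dG n z = y
    rw [map_add, add_sub_assoc, hz, add_sub_cancel]
  · refine fun h n => ⟨fun x y hx hxy => ?_, fun y hy => ?_⟩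
    · obtain ⟨n, rfl⟩ : ∃ m, n = m + 1 := ⟨n - 1, by ring⟩
      obtain ⟨p, hp⟩ := (h n (x, y)).1 (by simp [hx, hxy])
      exact ⟨p.1, congrArg Prod.fst hp⟩
    · obtain ⟨p, hp⟩ := (h n (0, y)).1 (by simp [hy])
      exact ⟨p.1, p.2, congrArg Prod.fst hp, congrArg Prod.snd hp⟩

end Cone

section SuccessiveApproximation

variable {R A B B' : Type*} [Ring R] [AddCommGroup A] [Module R A] [AddCommGroup B] [Module R B]
  [AddCommGroup B'] [Module R B']

/-- Completeness of a filtration: a series whose `j`-th term lies in `F j` has a sum, to which its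
partial sums converge. Separatedness (uniqueness of the sum) is not included. -/
def IsCompleteFiltration (F : ℕ → Submodule R A) : Prop :=
  ∀ a : ℕ → A, (∀ j, a j ∈ F j) → ∃ s, ∀ j, s - ∑ i ∈ range j, a i ∈ F j

lemma IsCompleteFiltration.prod {F : ℕ → Submodule R A} {G : ℕ → Submodule R B}
    (hF : IsCompleteFiltration F) (hG : IsCompleteFiltration G) :
    IsCompleteFiltration fun j => (F j).prod (G j) := by
  intro p hp
  obtain ⟨s, hs⟩ := hF (fun j => (p j).1) fun j => (hp j).1
  obtain ⟨t, ht⟩ := hG (fun j => (p j).2) fun j => (hp j).2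
  refine ⟨(s, t), fun j => ⟨?_, ?_⟩⟩
  · simpa [Prod.fst_sum] using hs j
  · simpa [Prod.snd_sum] using ht j

theorem mem_range_of_successive_approximation {d : A →ₗ[R] B} {d' : B →ₗ[R] B'}
    (hdd : d' ∘ₗ d = 0) {F : ℕ → Submodule R A} {G : ℕ → Submodule R B}
    (hF : IsCompleteFiltration F) (hG : ∀ b, (∀ j, b ∈ G j) → b = 0)
    (hd : ∀ j, ∀ a ∈ F j, d a ∈ G j)
    (approx : ∀ j, ∀ b ∈ G j, d' b = 0 → ∃ a ∈ F j, b - d a ∈ G (j + 1))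
    {b : B} (hb : b ∈ G 0) (hdb : d' b = 0) : b ∈ LinearMap.range d := by
  choose! a haF haG using approx
  let r : ℕ → B := fun j => Nat.rec b (fun j r => r - d (a j r)) j
  have hr : ∀ j, r j ∈ G j ∧ d' (r j) = 0 := by
    intro j
    induction j with
    | zero => exact ⟨hb, hdb⟩
    | succ j ih =>
      refine ⟨haG j _ ih.1 ih.2, ?_⟩
      have hda : d' (d (a j (r j))) = 0 := LinearMap.congr_fun hdd _
      rw [show r (j + 1) = r j - d (a j (r j)) from rfl, map_sub, ih.2, hda, sub_zero]
  have r_eq : ∀ j, r j = b - d (∑ i ∈ range j, a i (r i)) := by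
    intro j
    induction j with
    | zero => simp [r]
    | succ j ih =>
      rw [show r (j + 1) = r j - d (a j (r j)) from rfl, sum_range_succ, map_add, ← sub_sub, ← ih]
  obtain ⟨s, hs⟩ := hF (fun j => a j (r j)) fun j => haF j _ (hr j).1 (hr j).2
  refine ⟨s, (sub_eq_zero.1 (hG _ fun j => ?_)).symm⟩
  have h := sub_mem (hr j).1 (hd j _ (hs j))
  rwa [r_eq, map_sub, sub_sub_sub_cancel_right] at h

end SuccessiveApproximation

section Laurent

lemma sum_antidiagonal_antidiagonal_assoc {I M : Type*} [AddMonoid I] [HasAntidiagonal I]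
    [AddCommMonoid M] (g : I → I → I → M) (l : I) :
    ∑ p ∈ antidiagonal l, ∑ q ∈ antidiagonal p.1, g q.1 q.2 p.2 =
      ∑ p ∈ antidiagonal l, ∑ q ∈ antidiagonal p.2, g p.1 q.1 q.2 := by
  simp only [sum_sigma']
  apply sum_nbij' (fun ⟨⟨_, k⟩, ⟨i, j⟩⟩ => ⟨(i, j + k), (j, k)⟩)
    (fun ⟨⟨i, _⟩, ⟨j, k⟩⟩ => ⟨(i + j, k), (i, j)⟩)
  all_goals
    rintro ⟨⟨_, _⟩, ⟨_, _⟩⟩ h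
    simp only [mem_sigma, HasAntidiagonal.mem_antidiagonal] at h
    obtain ⟨rfl, rfl⟩ := h
    simp [add_assoc]

variable {K : Type} [CommRing K]
variable {C : ℤ → Type} [∀ n, AddCommGroup (C n)] [∀ n, Module K (C n)]
variable {D : ℤ → Type} [∀ n, AddCommGroup (D n)] [∀ n, Module K (D n)]
variable {E : ℤ → Type} [∀ n, AddCommGroup (E n)] [∀ n, Module K (E n)]

lemma uPow_antitone (n : ℤ) : Antitone fun m => uPow K C m n :=
  fun _ _ h _ hx i hi => hx i (hi.trans_le h)

lemma PerCyc.eq_of_mem_uPow {n N : ℤ} {x y : PerCyc K C n} (hx : x ∈ uPow K C N n)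
    (hy : y ∈ uPow K C N n) (h : ∀ l : ℕ, x.1 (N + l) = y.1 (N + l)) : x = y := by
  refine Subtype.ext (funext fun k => ?_)
  rcases lt_or_ge k N with hk | hk
  · rw [hx k hk, hy k hk]
  · obtain ⟨l, rfl⟩ := Int.le.dest hk
    exact h l

lemma PerCyc.eq_zero_of_forall_mem_uPow {n N : ℤ} {x : PerCyc K C n}
    (h : ∀ j : ℕ, x ∈ uPow K C (N + j) n) : x = 0 :=
  PerCyc.eq_of_mem_uPow (N := N) (by simpa using h 0) (zero_mem _) fun l =>
    h (l + 1) _ (by push_cast; omega)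

lemma isCompleteFiltration_uPow (N n : ℤ) :
    IsCompleteFiltration fun j : ℕ => uPow K C (N + j) n := by
  intro a ha
  have finsum_eq (j : ℕ) (k : ℤ) (hk : k < N + j) :
      ∑ᶠ i, (a i).1 k = ∑ i ∈ range j, (a i).1 k := by
    refine finsum_eq_sum_of_support_subset _ fun i hi => ?_
    by_contra hij
    have hji : j ≤ i := by simpa using hij
    exact hi (ha i k (by omega))
  refine ⟨⟨fun k => ∑ᶠ i, (a i).1 k, N, fun k hk => ?_⟩, fun j k hk => ?_⟩
  · simpa using finsum_eq 0 k (by simpa using hk)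
  · simp [finsum_eq j k hk]

lemma uExt_apply_add (e : ℤ) (F : (i : ℕ) → (m : ℤ) → C m →ₗ[K] D (m + e - 2 * (i : ℤ)))
    (n t : ℤ) {N : ℤ} {x : PerCyc K C n} (hx : x ∈ uPow K C N n) (l : ℕ) :
    (uExt K C D e F n t x).1 (N + l) = ∑ p ∈ antidiagonal l,
      tr K D (n - 2 * (N + p.2) + e - 2 * p.1) (t - 2 * (N + l))
        (F p.1 (n - 2 * (N + p.2)) (x.1 (N + p.2))) := by
  let term (i : ℕ) (r : ℤ) : D (t - 2 * (N + l)) :=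
    tr K D (n - 2 * r + e - 2 * i) (t - 2 * (N + l)) (F i (n - 2 * r) (x.1 r))
  have support_subset :
      (Function.support fun i : ℕ => term i (N + l - i)) ⊆ range (l + 1) := by
    intro i hi
    by_contra hil
    have hli : l < i := by simpa using hil
    refine hi ?_
    simp only [term, hx (N + l - i) (by omega), map_zero]
  calc (uExt K C D e F n t x).1 (N + l)
      = ∑ᶠ i : ℕ, term i (N + l - i) := rfl
    _ = ∑ i ∈ range (l + 1), term i (N + l - i) :=
        finsum_eq_sum_of_support_subset _ support_subset
    _ = ∑ i ∈ range (l + 1), term i (N + (l - i : ℕ)) :=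
        sum_congr rfl fun i hi => by
          rw [Nat.cast_sub (by simpa [Nat.lt_succ_iff] using hi), add_sub_assoc]
    _ = ∑ p ∈ antidiagonal l, term p.1 (N + p.2) :=
        (Nat.sum_antidiagonal_eq_sum_range_succ (fun i j => term i (N + j)) l).symm

/-- The composite of the sequences of operations `F` and `G`, with `k`-th term
`∑_{i+j=k} G i ∘ F j`. Only `e'' = e + e'` is meaningful; it is a separate parameter so that
the degree can be spelled as in the relations of an S¹-structure. -/
def opComp {e e' : ℤ} (e'' : ℤ) (G : (i : ℕ) → (m : ℤ) → D m →ₗ[K] E (m + e' - 2 * (i : ℤ)))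
    (F : (i : ℕ) → (m : ℤ) → C m →ₗ[K] D (m + e - 2 * (i : ℤ))) (k : ℕ) (m : ℤ) :
    C m →ₗ[K] E (m + e'' - 2 * (k : ℤ)) :=
  ∑ p ∈ antidiagonal k, tr K E (m + e - 2 * p.2 + e' - 2 * p.1) (m + e'' - 2 * k) ∘ₗ
    G p.1 (m + e - 2 * p.2) ∘ₗ F p.2 m

theorem uExt_comp_uExt {e e' e'' : ℤ} (he : e + e' = e'')
    (G : (i : ℕ) → (m : ℤ) → D m →ₗ[K] E (m + e' - 2 * (i : ℤ)))
    (F : (i : ℕ) → (m : ℤ) → C m →ₗ[K] D (m + e - 2 * (i : ℤ))) {n t : ℤ} (ht : t = n + e)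
    (s : ℤ) :
    uExt K D E e' G t s ∘ₗ uExt K C D e F n t = uExt K C E e'' (opComp e'' G F) n s := by
  ext1 x
  obtain ⟨N, hx⟩ : ∃ N, x ∈ uPow K C N n := x.2
  have hFx := uExt_mem_uPow K C D e F n t N x hx
  refine PerCyc.eq_of_mem_uPow (uExt_mem_uPow K D E e' G t s N _ hFx)
    (uExt_mem_uPow K C E e'' _ n s N x hx) fun l => ?_
  let term (i j r : ℕ) : E (s - 2 * (N + l)) :=
    tr K E (n - 2 * (N + r) + e - 2 * j + e' - 2 * i) (s - 2 * (N + l))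
      (G i (n - 2 * (N + r) + e - 2 * j) (F j (n - 2 * (N + r)) (x.1 (N + r))))
  calc (uExt K D E e' G t s (uExt K C D e F n t x)).1 (N + l)
      = ∑ p ∈ antidiagonal l, ∑ q ∈ antidiagonal p.2, term p.1 q.1 q.2 := by
        simp only [uExt_apply_add e' G t s hFx, uExt_apply_add e F n t hx, map_sum]
        refine sum_congr rfl fun p _ => sum_congr rfl fun q hq => ?_
        have hq : (q.1 : ℤ) + q.2 = p.2 := mod_cast HasAntidiagonal.mem_antidiagonal.1 hq
        exact tr_map_tr (fun m => m + e' - 2 * (p.1 : ℤ)) (G p.1) (by rw [ht, ← hq]; ring) _ _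
    _ = ∑ p ∈ antidiagonal l, ∑ q ∈ antidiagonal p.1, term q.1 q.2 p.2 :=
        (sum_antidiagonal_antidiagonal_assoc term l).symm
    _ = (uExt K C E e'' (opComp e'' G F) n s x).1 (N + l) := by
        simp only [uExt_apply_add e'' _ n s hx, opComp, LinearMap.sum_apply, map_sum]
        refine sum_congr rfl fun p _ => sum_congr rfl fun q hq => ?_
        have hq : (q.1 : ℤ) + q.2 = p.1 := mod_cast HasAntidiagonal.mem_antidiagonal.1 hq
        exact (tr_tr (by rw [← he, ← hq]; ring) _ _).symm

/-- The coefficient of `u ^ m`, transported to degree `a`; it is zero unless `a = n - 2 * m`. -/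
def PerCyc.coeff {n : ℤ} (m a : ℤ) : PerCyc K C n →ₗ[K] C a :=
  tr K C (n - 2 * m) a ∘ₗ LinearMap.proj m ∘ₗ (PerSub K C n).subtype

variable (K) in
/-- The monomial of degree `n` with coefficient `v` of degree `a`. The exponent `m` is determined
by `a = n - 2 * m`; if there is no such `m`, the value is zero. -/
def PerCyc.monomial (a n : ℤ) :
    C a →ₗ[K] PerCyc K C n :=
  (LinearMap.pi fun i => tr K C a (n - 2 * i)).codRestrict (PerSub K C n) fun v =>
    ⟨(n - a) / 2, fun i hi => tr_of_ne (by omega) v⟩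

lemma PerCyc.monomial_mem_uPow {m n a : ℤ} (h : a = n - 2 * m) (v : C a) :
    PerCyc.monomial K a n v ∈ uPow K C m n :=
  fun i hi => tr_of_ne (by omega) v

lemma PerCyc.coeff_monomial {m n a : ℤ} (h : a = n - 2 * m) (v : C a) :
    PerCyc.coeff m a (PerCyc.monomial K a n v) = v :=
  (tr_tr h a v).trans (tr_self a v)

lemma mem_uPow_succ_iff {m n a : ℤ} (h : a = n - 2 * m) {x : PerCyc K C n}
    (hx : x ∈ uPow K C m n) : x ∈ uPow K C (m + 1) n ↔ PerCyc.coeff m a x = 0 := by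
  refine Iff.trans ⟨fun hx' => hx' m (lt_add_one m), fun hm i hi => ?_⟩
    (tr_eq_zero_iff h.symm (x.1 m)).symm
  rcases (Int.lt_add_one_iff.1 hi).lt_or_eq with hi | rfl
  · exact hx i hi
  · exact hm

lemma coeff_uExt {e : ℤ} (F : (i : ℕ) → (m : ℤ) → C m →ₗ[K] D (m + e - 2 * (i : ℤ)))
    {m n t a : ℤ} (b : ℤ) (h : a = n - 2 * m) (ht : t = n + e) {x : PerCyc K C n}
    (hx : x ∈ uPow K C m n) :
    PerCyc.coeff m b (uExt K C D e F n t x) =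
      tr K D (a + e - 2 * (0 : ℕ)) b (F 0 a (PerCyc.coeff m a x)) := by
  subst h ht
  have lead := uExt_apply_add e F n (n + e) hx 0
  simp only [Nat.antidiagonal_zero, sum_singleton] at lead
  rw [show m + ((0 : ℕ) : ℤ) = m from add_zero m] at lead
  refine (congrArg _ lead).trans ((tr_tr (by simp; ring) b _).trans ?_)
  exact (tr_map_tr _ (F 0) rfl b _).symm

end Laurent

section Equivariant

variable {K : Type} [CommRing K]
variable {C : ℤ → Type} [∀ n, AddCommGroup (C n)] [∀ n, Module K (C n)]
variable {D : ℤ → Type} [∀ n, AddCommGroup (D n)] [∀ n, Module K (D n)]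
variable {S : S1Struct K C} {T : S1Struct K D}

lemma opComp_delta_delta (S : S1Struct K C) : opComp 2 S.δ S.δ = fun _ _ => 0 := by
  ext k m x
  exact (LinearMap.sum_apply _ _ x).trans (S.rel k m x)

lemma opComp_kappa_delta (κ : S1Map K C D S T) :
    opComp 1 (fun i m => tr K D (m - 2 * (i : ℤ)) (m + 0 - 2 * i) ∘ₗ κ.κ i m) S.δ =
      opComp 1 T.δ (fun i m => tr K D (m - 2 * (i : ℤ)) (m + 0 - 2 * i) ∘ₗ κ.κ i m) := by
  ext k m x
  have rel := κ.rel k m x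
  rw [sum_sub_distrib, sub_eq_zero] at rel
  simp only [opComp, LinearMap.sum_apply, LinearMap.comp_apply]
  refine Eq.trans (sum_congr rfl fun p _ => ?_)
    (rel.trans (Eq.trans (sum_congr rfl fun p _ => ?_) Nat.sum_antidiagonal_swap))
  · exact tr_tr (by ring) _ _
  · exact (tr_map_tr (fun m => m + 1 - 2 * (p.2 : ℤ)) (T.δ p.2) (by simp) _ _).symm

lemma deltaPer_comp_deltaPer (S : S1Struct K C) (n : ℤ) :
    deltaPer K C S (n + 1) ∘ₗ deltaPer K C S n = 0 := by
  rw [deltaPer, deltaPer, uExt_comp_uExt (e'' := 2) (by norm_num) _ _ rfl, opComp_delta_delta]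
  ext x k
  simp

lemma kappaPer_comp_deltaPer (κ : S1Map K C D S T) (n : ℤ) :
    kappaPer K C D κ (n + 1) ∘ₗ deltaPer K C S n =
      deltaPer K D T n ∘ₗ kappaPer K C D κ n := by
  rw [kappaPer, kappaPer, deltaPer, deltaPer, uExt_comp_uExt (e'' := 1) (by norm_num) _ _ rfl,
    uExt_comp_uExt (e'' := 1) (by norm_num) _ _ (add_zero n).symm, opComp_kappa_delta]

lemma coeff_deltaPer (S : S1Struct K C) {m n a : ℤ} (h : a = n - 2 * m) {x : PerCyc K C n}
    (hx : x ∈ uPow K C m n) :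
    PerCyc.coeff m (a + 1) (deltaPer K C S n x) = d0 K C S a (PerCyc.coeff m a x) :=
  coeff_uExt S.δ (a + 1) h rfl hx

lemma coeff_kappaPer (κ : S1Map K C D S T) {m n a : ℤ} (h : a = n - 2 * m) {x : PerCyc K C n}
    (hx : x ∈ uPow K C m n) :
    PerCyc.coeff m a (kappaPer K C D κ n x) = k0 K C D κ a (PerCyc.coeff m a x) :=
  (coeff_uExt _ a h (add_zero n).symm hx).trans (tr_tr (by ring) a _)

lemma deltaPer_mem_uPow (S : S1Struct K C) {m n : ℤ} {x : PerCyc K C n}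
    (hx : x ∈ uPow K C m n) : deltaPer K C S n x ∈ uPow K C m (n + 1) :=
  uExt_mem_uPow K C C 1 S.δ n (n + 1) m x hx

lemma kappaPer_mem_uPow (κ : S1Map K C D S T) {m n : ℤ} {x : PerCyc K C n}
    (hx : x ∈ uPow K C m n) : kappaPer K C D κ n x ∈ uPow K D m n :=
  uExt_mem_uPow K C D 0 _ n n m x hx

lemma d0_comp_d0 (S : S1Struct K C) (n : ℤ) : d0 K C S (n + 1) ∘ₗ d0 K C S n = 0 := by
  ext v
  have h : n = n - 2 * 0 := by ring
  have hv := PerCyc.monomial_mem_uPow (K := K) h v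
  have hdd := LinearMap.congr_fun (deltaPer_comp_deltaPer S n) (PerCyc.monomial K n n v)
  calc d0 K C S (n + 1) (d0 K C S n v)
      = PerCyc.coeff 0 (n + 1 + 1)
          (deltaPer K C S (n + 1) (deltaPer K C S n (PerCyc.monomial K n n v))) := by
        rw [coeff_deltaPer S (by ring) (deltaPer_mem_uPow S hv), coeff_deltaPer S h hv,
          PerCyc.coeff_monomial h]
    _ = 0 := (congrArg _ hdd).trans (map_zero _)

lemma k0_comp_d0 (κ : S1Map K C D S T) (n : ℤ) :
    k0 K C D κ (n + 1) ∘ₗ d0 K C S n = d0 K D T n ∘ₗ k0 K C D κ n := by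
  ext v
  have h : n = n - 2 * 0 := by ring
  have hv := PerCyc.monomial_mem_uPow (K := K) h v
  have hκδ := LinearMap.congr_fun (kappaPer_comp_deltaPer κ n) (PerCyc.monomial K n n v)
  calc k0 K C D κ (n + 1) (d0 K C S n v)
      = PerCyc.coeff 0 (n + 1)
          (kappaPer K C D κ (n + 1) (deltaPer K C S n (PerCyc.monomial K n n v))) := by
        rw [coeff_kappaPer κ (by ring) (deltaPer_mem_uPow S hv), coeff_deltaPer S h hv,
          PerCyc.coeff_monomial h]
    _ = PerCyc.coeff 0 (n + 1)
          (deltaPer K D T n (kappaPer K C D κ n (PerCyc.monomial K n n v))) := congrArg _ hκδ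
    _ = d0 K D T n (k0 K C D κ n v) := by
        rw [coeff_deltaPer T h (kappaPer_mem_uPow κ hv), coeff_kappaPer κ h hv,
          PerCyc.coeff_monomial h]

end Equivariant

section PeriodicCone

variable {K : Type} [CommRing K]
variable {C : ℤ → Type} [∀ n, AddCommGroup (C n)] [∀ n, Module K (C n)]
variable {D : ℤ → Type} [∀ n, AddCommGroup (D n)] [∀ n, Module K (D n)]
variable {S : S1Struct K C} {T : S1Struct K D}

variable (K C D) in
/-- The `u`-adic filtration of the degree `n` part of the mapping cone of a map `C^∧ → D^∧`. -/
def coneUPow (m n : ℤ) : Submodule K (PerCyc K C (n + 1) × PerCyc K D n) :=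
  (uPow K C m (n + 1)).prod (uPow K D m n)

/-- The coefficient of `u ^ m` on the mapping cone of a map `C^∧ → D^∧`, transported to
degree `a`; it is zero unless `a = n - 2 * m`. -/
def coneCoeff {n : ℤ} (m a : ℤ) : PerCyc K C (n + 1) × PerCyc K D n →ₗ[K] C (a + 1) × D a :=
  (PerCyc.coeff m (a + 1)).prodMap (PerCyc.coeff m a)

lemma mem_coneUPow_succ_iff {m n a : ℤ} (h : a = n - 2 * m)
    {p : PerCyc K C (n + 1) × PerCyc K D n} (hp : p ∈ coneUPow K C D m n) :
    p ∈ coneUPow K C D (m + 1) n ↔ coneCoeff m a p = 0 := by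
  have h' : a + 1 = n + 1 - 2 * m := by omega
  rw [coneUPow, Submodule.mem_prod, mem_uPow_succ_iff h' hp.1, mem_uPow_succ_iff h hp.2]
  exact Prod.mk_eq_zero.symm

lemma exists_mem_coneUPow {n : ℤ} (p : PerCyc K C (n + 1) × PerCyc K D n) :
    ∃ m, p ∈ coneUPow K C D m n := by
  obtain ⟨⟨x, M, hx⟩, ⟨y, N, hy⟩⟩ := p
  exact ⟨min M N, uPow_antitone _ (min_le_left M N) hx, uPow_antitone _ (min_le_right M N) hy⟩

lemma exists_mem_coneUPow_coneCoeff_eq {m n a : ℤ} (h : a = n - 2 * m) (v : C (a + 1) × D a) :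
    ∃ p ∈ coneUPow K C D m n, coneCoeff m a p = v := by
  have h' : a + 1 = n + 1 - 2 * m := by omega
  exact ⟨(PerCyc.monomial K (a + 1) (n + 1) v.1, PerCyc.monomial K a n v.2),
    ⟨PerCyc.monomial_mem_uPow h' v.1, PerCyc.monomial_mem_uPow h v.2⟩,
    Prod.ext (PerCyc.coeff_monomial h' v.1) (PerCyc.coeff_monomial h v.2)⟩

lemma coneD_mem_coneUPow (κ : S1Map K C D S T) {m n : ℤ}
    {p : PerCyc K C (n + 1) × PerCyc K D n} (hp : p ∈ coneUPow K C D m n) :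
    coneD (deltaPer K C S) (deltaPer K D T) (kappaPer K C D κ) n p ∈
      coneUPow K C D m (n + 1) :=
  ⟨deltaPer_mem_uPow S hp.1, sub_mem (kappaPer_mem_uPow κ hp.1) (deltaPer_mem_uPow T hp.2)⟩

lemma coneCoeff_coneD (κ : S1Map K C D S T) {m n a : ℤ} (h : a = n - 2 * m)
    {p : PerCyc K C (n + 1) × PerCyc K D n} (hp : p ∈ coneUPow K C D m n) :
    coneCoeff m (a + 1) (coneD (deltaPer K C S) (deltaPer K D T) (kappaPer K C D κ) n p) =
      coneD (d0 K C S) (d0 K D T) (k0 K C D κ) a (coneCoeff m a p) := by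
  have h' : a + 1 = n + 1 - 2 * m := by omega
  refine Prod.ext (coeff_deltaPer S h' hp.1) ((map_sub (PerCyc.coeff m (a + 1)) _ _).trans ?_)
  exact congrArg₂ _ (coeff_kappaPer κ h' hp.1) (coeff_deltaPer T h hp.2)

lemma exists_sub_coneD_mem_coneUPow_succ (κ : S1Map K C D S T) {m n a : ℤ} (h : a = n - 2 * m)
    (exact_at : Function.Exact (coneD (d0 K C S) (d0 K D T) (k0 K C D κ) a)
      (coneD (d0 K C S) (d0 K D T) (k0 K C D κ) (a + 1)))
    {p : PerCyc K C (n + 1 + 1) × PerCyc K D (n + 1)} (hp : p ∈ coneUPow K C D m (n + 1))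
    (hdp : coneD (deltaPer K C S) (deltaPer K D T) (kappaPer K C D κ) (n + 1) p = 0) :
    ∃ q ∈ coneUPow K C D m n,
      p - coneD (deltaPer K C S) (deltaPer K D T) (kappaPer K C D κ) n q ∈
        coneUPow K C D (m + 1) (n + 1) := by
  have h' : a + 1 = n + 1 - 2 * m := by omega
  obtain ⟨v, hv⟩ := (exact_at (coneCoeff m (a + 1) p)).1 <| by
    rw [← coneCoeff_coneD κ h' hp, hdp, map_zero]
  obtain ⟨q, hq, rfl⟩ := exists_mem_coneUPow_coneCoeff_eq (K := K) h v
  refine ⟨q, hq, (mem_coneUPow_succ_iff h' (sub_mem hp (coneD_mem_coneUPow κ hq))).2 ?_⟩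
  rw [map_sub, coneCoeff_coneD κ h hq, hv, sub_self]

theorem exact_coneD_kappaPer (κ : S1Map K C D S T)
    (h : ∀ n, Function.Exact (coneD (d0 K C S) (d0 K D T) (k0 K C D κ) n)
      (coneD (d0 K C S) (d0 K D T) (k0 K C D κ) (n + 1))) (n : ℤ) :
    Function.Exact (coneD (deltaPer K C S) (deltaPer K D T) (kappaPer K C D κ) n)
      (coneD (deltaPer K C S) (deltaPer K D T) (kappaPer K C D κ) (n + 1)) := by
  have hdd := coneD_comp_coneD (deltaPer_comp_deltaPer S) (deltaPer_comp_deltaPer T)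
    (kappaPer_comp_deltaPer κ) n
  refine LinearMap.exact_of_comp_eq_zero_of_ker_le_range hdd fun p hdp => ?_
  obtain ⟨N, hp⟩ := exists_mem_coneUPow p
  refine mem_range_of_successive_approximation hdd
    (F := fun j : ℕ => coneUPow K C D (N + j) n)
    (G := fun j : ℕ => coneUPow K C D (N + j) (n + 1))
    ((isCompleteFiltration_uPow (K := K) N (n + 1)).prod (isCompleteFiltration_uPow N n))
    (fun b hb => ?_) (fun j a ha => coneD_mem_coneUPow κ ha) (fun j b hb hdb => ?_)
    (by simpa using hp) hdp
  · exact Prod.ext (PerCyc.eq_zero_of_forall_mem_uPow fun j => (hb j).1)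
      (PerCyc.eq_zero_of_forall_mem_uPow fun j => (hb j).2)
  · simpa only [Nat.cast_succ, add_assoc] using
      exists_sub_coneD_mem_coneUPow_succ κ rfl (h _) hb hdb

end PeriodicCone

end

theorem stmt8 (K : Type) [CommRing K]
    (C : ℤ → Type) [∀ n, AddCommGroup (C n)] [∀ n, Module K (C n)]
    (D : ℤ → Type) [∀ n, AddCommGroup (D n)] [∀ n, Module K (D n)]
    (S : S1Struct K C) (T : S1Struct K D) (κ : S1Map K C D S T)
    (hqis : InducesIso K C D (d0 K C S) (d0 K D T) (k0 K C D κ)) :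
    InducesIso K (PerCyc K C) (PerCyc K D) (deltaPer K C S) (deltaPer K D T)
      (kappaPer K C D κ) := by
  rw [inducesIso_iff_exact_coneD (d0_comp_d0 S) (d0_comp_d0 T) (k0_comp_d0 κ)] at hqis
  rw [inducesIso_iff_exact_coneD (deltaPer_comp_deltaPer S) (deltaPer_comp_deltaPer T)
    (kappaPer_comp_deltaPer κ)]
  exact exact_coneD_kappaPer κ hqis
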